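/- If R is a tournament with inv(R) = 3 admitting pairwise disjoint sets A, B, C ⊆ V(R) such that A∪B, A∪C, B∪C form a decycling family of R, then for L = C⃗₃ (the directed 3-cycle) we have inv(L → R) = 3 < inv(L) + inv(R) = 4. In particular, there is an explicit 9-vertex tournament R for which inv(R) = inv(C⃗₃ → R) = 3, disproving the dijoin conjecture. -/

import Mathlib

/-- Inverting a set `X` in a digraph `D`: edges with both endpoints in `X`
are reversed, all other edges are unchanged. -/
def Invert {V : Type*} (D : V → V → Prop) (X : Set V) : V → V → Prop :=
  fun u v => (u ∈ X ∧ v ∈ X ∧ D v u) ∨ (¬(u ∈ X ∧ v ∈ X) ∧ D u v)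

/-- A digraph is acyclic if it has no directed cycle. -/
def IsAcyclic {V : Type*} (D : V → V → Prop) : Prop :=
  ∀ x : V, ¬ Relation.TransGen D x x

/-- A loopless digraph without digons (an oriented graph). -/
def IsOriented {V : Type*} (D : V → V → Prop) : Prop :=
  ∀ u v, D u v → ¬ D v u

/-- A tournament: an oriented graph with exactly one edge between any two
distinct vertices. -/
def IsTournament {V : Type*} (D : V → V → Prop) : Prop :=
  (∀ u v, D u v → ¬ D v u) ∧ ∀ u v, u ≠ v → D u v ∨ D v u

/-- The inversion number of a digraph: the minimum length of a decycling
family, i.e. a sequence of sets whose successive inversion makes `D` acyclic. -/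
noncomputable def invNum {V : Type*} (D : V → V → Prop) : ℕ :=
  sInf {k | ∃ Xs : List (Set V), Xs.length = k ∧ IsAcyclic (Xs.foldl Invert D)}

/-- The dijoin `L → R`: disjoint copies of `L` and `R` with all edges oriented
from `L` towards `R`. -/
def Dijoin {α β : Type*} (L : α → α → Prop) (R : β → β → Prop) :
    α ⊕ β → α ⊕ β → Prop
  | Sum.inl u, Sum.inl v => L u v
  | Sum.inr u, Sum.inr v => R u v
  | Sum.inl _, Sum.inr _ => True
  | Sum.inr _, Sum.inl _ => False

/-- The directed 3-cycle. -/
def C3 : Fin 3 → Fin 3 → Prop := fun u v => v = u + 1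

/-!
Inverting the sets of a family `Xs` reverses the edge `uv` exactly when an odd number of members
contain both `u` and `v`. Suppose a minimum decycling family of `R` has an odd number of members,
while every vertex of `R` lies in an even number of them. Add to each member the same set `S` of
vertices of `L`: the edges between `L` and `R` are reversed an even number of times and the edges
inside `S` an odd number of times, so a single set `S` that decycles `L` is handled for free.
The family `A ∪ B, A ∪ C, B ∪ C` is of this kind when `A`, `B`, `C` are pairwise disjoint.

The nine-vertex tournament consists of three blocks `{0,1,2}, {3,4,5}, {6,7,8}`, any two of which
span the same six-vertex tournament. Two sets `X`, `Y` colour each block with one of two colours,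
and a check over all pairs of subsets of six vertices shows that two blocks of the same colour
carry a directed triangle after inverting `X` and `Y`. Two of the three blocks share a colour, so
two inversions never suffice.
-/

section Acyclic

variable {α β : Type*}

theorem IsAcyclic.of_hom {D : α → α → Prop} {E : β → β → Prop} (f : α → β)
    (hf : ∀ u v, D u v → E (f u) (f v)) (hE : IsAcyclic E) : IsAcyclic D :=
  fun x hx => hE (f x) (Relation.TransGen.lift f hf x x hx)

theorem isAcyclic_lt [Preorder α] : IsAcyclic (fun a b : α => a < b) := fun x hx => by
  rw [Relation.transGen_eq_self] at hx
  exact lt_irrefl x hx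

theorem IsAcyclic.not_threeCycle {D : α → α → Prop} (hD : IsAcyclic D) {u v w : α}
    (huv : D u v) (hvw : D v w) : ¬ D w u :=
  fun hwu => hD u (((Relation.TransGen.single huv).tail hvw).tail hwu)

theorem transGen_dijoin {L : α → α → Prop} {R : β → β → Prop} {x y : α ⊕ β}
    (hxy : Relation.TransGen (Dijoin L R) x y) :
    Dijoin (Relation.TransGen L) (Relation.TransGen R) x y := by
  induction hxy with
  | @single y hxy =>
    rcases x with x | x <;> rcases y with y | y <;> simp only [Dijoin] at hxy ⊢
    all_goals exact .single hxy
  | @tail y z _ hyz ih =>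
    rcases x with x | x <;> rcases y with y | y <;> rcases z with z | z <;>
      simp only [Dijoin] at hyz ih ⊢
    all_goals exact ih.tail hyz

theorem IsAcyclic.dijoin {L : α → α → Prop} {R : β → β → Prop}
    (hL : IsAcyclic L) (hR : IsAcyclic R) : IsAcyclic (Dijoin L R) := by
  rintro (x | x) hx
  · exact hL x (transGen_dijoin hx)
  · exact hR x (transGen_dijoin hx)

end Acyclic

section Invert

variable {V W : Type*}

theorem invert_empty (D : V → V → Prop) : Invert D ∅ = D := by
  funext u v
  simp [Invert]

theorem invert_iff_ite (D : V → V → Prop) (X : Set V) (u v : V) [Decidable (u ∈ X ∧ v ∈ X)] :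
    Invert D X u v ↔ if u ∈ X ∧ v ∈ X then D v u else D u v := by
  unfold Invert
  split_ifs <;> tauto

instance (D : V → V → Prop) [DecidableRel D] (X : Set V) [DecidablePred (· ∈ X)] :
    DecidableRel (Invert D X) :=
  fun u v => decidable_of_iff' _ (invert_iff_ite D X u v)

theorem foldl_invert_preimage (f : V → W) (E : W → W → Prop) (Xs : List (Set W)) :
    (Xs.map (f ⁻¹' ·)).foldl Invert (f ⁻¹'o E) = f ⁻¹'o (Xs.foldl Invert E) := by
  induction Xs generalizing E with
  | nil => rfl
  | cons X _ ih => exact ih (Invert E X)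

open Classical in
theorem foldl_invert_iff_even_countP (D : V → V → Prop) (Xs : List (Set V)) (u v : V) :
    Xs.foldl Invert D u v ↔
      if Even (Xs.countP (fun X => u ∈ X ∧ v ∈ X)) then D u v else D v u := by
  induction Xs generalizing D with
  | nil => simp
  | cons X Xs ih =>
    rw [List.foldl_cons, ih, List.countP_cons, invert_iff_ite, invert_iff_ite]
    by_cases hX : u ∈ X ∧ v ∈ X
    · simp only [hX, and_self, if_true, decide_true, Nat.even_add_one]
      split_ifs <;> rfl
    · simp [hX, and_comm (a := v ∈ X)]

open Classical in
theorem foldl_invert_dijoin (L : V → V → Prop) (R : W → W → Prop) (S : Set V)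
    {Xs : List (Set W)} (hodd : Odd Xs.length) (heven : ∀ w, Even (Xs.countP (w ∈ ·))) :
    (Xs.map (fun X => Sum.inl '' S ∪ Sum.inr '' X)).foldl Invert (Dijoin L R) =
      Dijoin (Invert L S) (Xs.foldl Invert R) := by
  have hlength : ¬ Even Xs.length := Nat.not_even_iff_odd.2 hodd
  funext x y
  rw [foldl_invert_iff_even_countP, List.countP_map]
  rcases x with u | u <;> rcases y with v | v
  · by_cases hu : u ∈ S <;> by_cases hv : v ∈ S <;>
      simp [Function.comp_def, Dijoin, invert_iff_ite, hu, hv, hlength]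
  · by_cases hu : u ∈ S <;> simp [Function.comp_def, Dijoin, hu, heven v]
  · by_cases hv : v ∈ S <;> simp [Function.comp_def, Dijoin, hv, heven u]
  · simp [Function.comp_def, Dijoin, foldl_invert_iff_even_countP R]

open Classical in
theorem even_countP_mem_pairwise_union {A B C : Set V} (hAB : Disjoint A B) (hAC : Disjoint A C)
    (hBC : Disjoint B C) (v : V) : Even ([A ∪ B, A ∪ C, B ∪ C].countP (v ∈ ·)) := by
  have hAB' : v ∈ A → v ∉ B := fun hA hB => Set.disjoint_left.1 hAB hA hB
  have hAC' : v ∈ A → v ∉ C := fun hA hC => Set.disjoint_left.1 hAC hA hC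
  have hBC' : v ∈ B → v ∉ C := fun hB hC => Set.disjoint_left.1 hBC hB hC
  by_cases hA : v ∈ A <;> by_cases hB : v ∈ B <;> by_cases hC : v ∈ C <;>
    simp_all

end Invert

section InversionNumber

variable {V W : Type*} {D : V → V → Prop} {E : W → W → Prop}

/-- The decycling families of a digraph: the finite sequences of sets whose successive inversion
makes the digraph acyclic. -/
def IsDecycling (D : V → V → Prop) (Xs : List (Set V)) : Prop :=
  IsAcyclic (Xs.foldl Invert D)

theorem IsDecycling.preimage {Xs : List (Set W)} (hXs : IsDecycling E Xs) (f : V → W) :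
    IsDecycling (f ⁻¹'o E) (Xs.map (f ⁻¹' ·)) := by
  unfold IsDecycling
  rw [foldl_invert_preimage]
  exact IsAcyclic.of_hom f (fun _ _ => id) hXs

theorem invNum_le_length {Xs : List (Set V)} (hXs : IsDecycling D Xs) : invNum D ≤ Xs.length :=
  Nat.sInf_le ⟨Xs, rfl, hXs⟩

theorem le_invNum {n : ℕ} {Xs : List (Set V)} (hXs : IsDecycling D Xs)
    (h : ∀ Ys, IsDecycling D Ys → n ≤ Ys.length) : n ≤ invNum D := by
  refine le_csInf ⟨_, Xs, rfl, hXs⟩ ?_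
  rintro _ ⟨Ys, rfl, hYs⟩
  exact h Ys hYs

theorem exists_isDecycling_of_invNum_pos (h : 0 < invNum D) :
    ∃ Xs, Xs.length = invNum D ∧ IsDecycling D Xs :=
  Nat.sInf_mem (Nat.nonempty_of_pos_sInf h)

theorem exists_isAcyclic_invert_of_invNum_eq_one (h : invNum D = 1) :
    ∃ X, IsAcyclic (Invert D X) := by
  obtain ⟨Xs, hlength, hXs⟩ := exists_isDecycling_of_invNum_pos (h ▸ one_pos)
  obtain ⟨X, rfl⟩ := List.length_eq_one_iff.1 (hlength.trans h)
  exact ⟨X, hXs⟩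

theorem invNum_preimage_le {Xs : List (Set W)} (hXs : IsDecycling E Xs) (f : V → W) :
    invNum (f ⁻¹'o E) ≤ invNum E :=
  le_invNum hXs fun Ys hYs => by
    simpa only [List.length_map] using invNum_le_length (hYs.preimage f)

open Classical in
theorem invNum_dijoin_eq_invNum_right {L : V → V → Prop} {R : W → W → Prop} {S : Set V}
    {Xs : List (Set W)} (hS : IsAcyclic (Invert L S)) (hXs : IsDecycling R Xs)
    (hmin : Xs.length = invNum R) (hodd : Odd Xs.length)
    (heven : ∀ w, Even (Xs.countP (w ∈ ·))) :
    invNum (Dijoin L R) = invNum R := by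
  have hjoin : IsDecycling (Dijoin L R) (Xs.map fun X => Sum.inl '' S ∪ Sum.inr '' X) := by
    unfold IsDecycling
    rw [foldl_invert_dijoin L R S hodd heven]
    exact hS.dijoin hXs
  apply le_antisymm
  · simpa only [List.length_map, hmin] using invNum_le_length hjoin
  · exact invNum_preimage_le hjoin Sum.inr

end InversionNumber

theorem isAcyclic_invert_C3 : IsAcyclic (Invert C3 {0, 1}) := by
  refine isAcyclic_lt.of_hom (![2, 0, 1] : Fin 3 → ℕ) ?_
  simp only [Invert, C3, Set.mem_insert_iff, Set.mem_singleton_iff]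
  decide

theorem not_isAcyclic_C3 : ¬ IsAcyclic C3 :=
  fun h => h.not_threeCycle (show C3 0 1 from rfl) (show C3 1 2 from rfl) (show C3 2 0 from rfl)

theorem invNum_C3 : invNum C3 = 1 := by
  have hdecycling : IsDecycling C3 [{0, 1}] := isAcyclic_invert_C3
  refine le_antisymm (invNum_le_length hdecycling) (le_invNum hdecycling fun Ys hYs => ?_)
  rw [Nat.one_le_iff_ne_zero, Ne, List.length_eq_zero_iff]
  rintro rfl
  exact not_isAcyclic_C3 hYs

section BlockTournament

/-- The tournament on `n` consecutive blocks of three vertices in which `u < v` are joined from `v`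
to `u` exactly when they are first or last vertices of two different blocks. For `n = 3`, with
vertices numbered from `0`, this is the explicit nine-vertex tournament; in general `Fin.divNat`
is the block of a vertex and `Fin.modNat` its position there. -/
def BlockTournament (n : ℕ) (u v : Fin (n * 3)) : Prop :=
  if u.modNat ≠ 1 ∧ v.modNat ≠ 1 ∧ u.divNat ≠ v.divNat then v < u else u < v

/-- The first and the last vertex of a block: the sets `A`, `B`, `C` of the nine-vertex tournament
are those of its three blocks. -/
def blockEnds {n : ℕ} (c : Fin n) : Set (Fin (n * 3)) :=
  {v | v.modNat ≠ 1 ∧ v.divNat = c}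

/-- The map of vertices, preserving the position inside the block, given by a map of blocks. -/
def mapBlocks {m n : ℕ} (e : Fin m → Fin n) (v : Fin (m * 3)) : Fin (n * 3) :=
  Fin.mkDivMod (e v.divNat) v.modNat

/-- A two-colouring of the blocks determined by two sets `X`, `Y`. The first vertex of a block is
tested for lying in `X ∩ Y` and for having, after the inversion, exactly one out-neighbour in its
block; the colour says whether exactly one of the tests succeeds. The formula was found by
computing all decycling pairs `X, Y` for two blocks: as a relation between the traces of `X, Y` on
the first and on the second block they form a bipartite graph, which it two-colours. -/
def BlockColour {n : ℕ} (X Y : Set (Fin (n * 3))) (c : Fin n) : Prop :=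
  Fin.mkDivMod c 0 ∈ X ∩ Y ↔
    ([X, Y].foldl Invert (BlockTournament n) (Fin.mkDivMod c 0) (Fin.mkDivMod c 1) ↔
      [X, Y].foldl Invert (BlockTournament n) (Fin.mkDivMod c 0) (Fin.mkDivMod c 2))

variable {m n : ℕ}

instance : DecidableRel (BlockTournament n) := fun u v => by
  unfold BlockTournament
  infer_instance

instance (c : Fin n) : DecidablePred (· ∈ blockEnds c) := fun v =>
  inferInstanceAs (Decidable (v.modNat ≠ 1 ∧ v.divNat = c))

theorem isTournament_blockTournament (n : ℕ) : IsTournament (BlockTournament n) := by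
  unfold IsTournament BlockTournament
  constructor <;> intro u v <;> grind

theorem disjoint_blockEnds {c d : Fin n} (hcd : c ≠ d) : Disjoint (blockEnds c) (blockEnds d) :=
  Set.disjoint_left.2 fun _ hc hd => hcd (hc.2.symm.trans hd.2)

theorem isDecycling_blockTournament_three : IsDecycling (BlockTournament 3)
    [blockEnds 0 ∪ blockEnds 1, blockEnds 0 ∪ blockEnds 2, blockEnds 1 ∪ blockEnds 2] := by
  refine isAcyclic_lt.of_hom id ?_
  simp only [List.foldl, id]
  decide +kernel

theorem mapBlocks_mkDivMod (e : Fin m → Fin n) (c : Fin m) (i : Fin 3) :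
    mapBlocks e (Fin.mkDivMod c i) = Fin.mkDivMod (e c) i := by
  rw [mapBlocks, Fin.divNat_mkDivMod, Fin.modNat_mkDivMod]

theorem strictMono_mapBlocks {e : Fin m → Fin n} (he : StrictMono e) :
    StrictMono (mapBlocks e) := by
  intro u v huv
  rw [Fin.lt_def] at huv
  simp only [mapBlocks, Fin.lt_def, Fin.coe_mkDivMod, Fin.coe_modNat]
  have hdiv : u.divNat ≤ v.divNat := Nat.div_le_div_right huv.le
  rcases hdiv.lt_or_eq with hlt | heq
  · have := Fin.lt_def.1 (he hlt)
    omega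
  · have : (u : ℕ) / 3 = (v : ℕ) / 3 := congrArg Fin.val heq
    rw [heq]
    omega

theorem preimage_mapBlocks_blockTournament {e : Fin m → Fin n} (he : StrictMono e) :
    mapBlocks e ⁻¹'o BlockTournament n = BlockTournament m := by
  have hdiv (u : Fin (m * 3)) : (mapBlocks e u).divNat = e u.divNat := Fin.divNat_mkDivMod _ _
  have hmod (u : Fin (m * 3)) : (mapBlocks e u).modNat = u.modNat := Fin.modNat_mkDivMod _ _
  funext u v
  simp only [Order.Preimage, BlockTournament, hdiv, hmod, he.injective.ne_iff,
    (strictMono_mapBlocks he).lt_iff_lt]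

theorem blockColour_preimage_mapBlocks {e : Fin m → Fin n} (he : StrictMono e)
    (X Y : Set (Fin (n * 3))) (c : Fin m) :
    BlockColour (mapBlocks e ⁻¹' X) (mapBlocks e ⁻¹' Y) c ↔ BlockColour X Y (e c) := by
  have hfold : [mapBlocks e ⁻¹' X, mapBlocks e ⁻¹' Y].foldl Invert (BlockTournament m) =
      mapBlocks e ⁻¹'o [X, Y].foldl Invert (BlockTournament n) := by
    rw [← preimage_mapBlocks_blockTournament he]
    exact foldl_invert_preimage (mapBlocks e) (BlockTournament n) [X, Y]
  simp only [BlockColour, hfold, Order.Preimage, ← Set.preimage_inter, Set.mem_preimage,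
    mapBlocks_mkDivMod]

theorem exists_threeCycle_of_blockColour_iff : ∀ X Y : Finset (Fin (2 * 3)),
    (BlockColour (X : Set (Fin (2 * 3))) Y 0 ↔ BlockColour (X : Set (Fin (2 * 3))) Y 1) →
    ∃ u v, [(X : Set (Fin (2 * 3))), Y].foldl Invert (BlockTournament 2) u v ∧
      ∃ w, [(X : Set (Fin (2 * 3))), Y].foldl Invert (BlockTournament 2) v w ∧
        [(X : Set (Fin (2 * 3))), Y].foldl Invert (BlockTournament 2) w u := by
  simp only [BlockColour, List.foldl]
  decide +kernel

theorem not_isDecycling_of_blockColour_iff {X Y : Set (Fin (n * 3))} {c d : Fin n} (hcd : c < d)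
    (hcolour : BlockColour X Y c ↔ BlockColour X Y d) :
    ¬ IsDecycling (BlockTournament n) [X, Y] := by
  intro hXY
  have he : StrictMono ![c, d] := by simpa [Fin.strictMono_iff_lt_succ] using hcd
  have hpair := hXY.preimage (mapBlocks ![c, d])
  rw [preimage_mapBlocks_blockTournament he, List.map_cons, List.map_singleton] at hpair
  have hpairColour := (blockColour_preimage_mapBlocks he X Y 0).trans
    (hcolour.trans (blockColour_preimage_mapBlocks he X Y 1).symm)
  generalize mapBlocks ![c, d] ⁻¹' X = X₂ at hpair hpairColour
  generalize mapBlocks ![c, d] ⁻¹' Y = Y₂ at hpair hpairColour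
  lift X₂ to Finset (Fin (2 * 3)) using X₂.toFinite
  lift Y₂ to Finset (Fin (2 * 3)) using Y₂.toFinite
  obtain ⟨u, v, huv, w, hvw, hwu⟩ := exists_threeCycle_of_blockColour_iff X₂ Y₂ hpairColour
  exact IsAcyclic.not_threeCycle hpair huv hvw hwu

open Classical in
theorem exists_lt_blockColour_iff (hn : 2 < n) (X Y : Set (Fin (n * 3))) :
    ∃ c d, c < d ∧ (BlockColour X Y c ↔ BlockColour X Y d) := by
  obtain ⟨c, d, hne, hcolour⟩ := Fintype.exists_ne_map_eq_of_card_lt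
    (fun c => decide (BlockColour X Y c)) (by simpa using hn)
  rw [decide_eq_decide] at hcolour
  rcases lt_or_gt_of_ne hne with hlt | hgt
  · exact ⟨c, d, hlt, hcolour⟩
  · exact ⟨d, c, hgt, hcolour.symm⟩

theorem three_le_length_of_isDecycling_blockTournament (hn : 2 < n)
    {Xs : List (Set (Fin (n * 3)))} (hXs : IsDecycling (BlockTournament n) Xs) :
    3 ≤ Xs.length := by
  have hpair (X Y : Set (Fin (n * 3))) : ¬ IsDecycling (BlockTournament n) [X, Y] := by
    obtain ⟨c, d, hcd, hcolour⟩ := exists_lt_blockColour_iff hn X Y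
    exact not_isDecycling_of_blockColour_iff hcd hcolour
  rcases Xs with _ | ⟨X, _ | ⟨Y, _ | ⟨Z, Zs⟩⟩⟩
  · exact absurd (by simpa [IsDecycling, invert_empty] using hXs) (hpair ∅ ∅)
  · exact absurd (by simpa [IsDecycling, invert_empty] using hXs) (hpair X ∅)
  · exact absurd hXs (hpair X Y)
  · simp

theorem invNum_blockTournament_three : invNum (BlockTournament 3) = 3 :=
  le_antisymm (invNum_le_length isDecycling_blockTournament_three)
    (le_invNum isDecycling_blockTournament_three fun _ =>
      three_le_length_of_isDecycling_blockTournament (by decide))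

end BlockTournament

theorem dijoin_conjecture_counterexample_general {α β : Type*} {L : α → α → Prop}
    {R : β → β → Prop} (hL : invNum L = 1) (hR : invNum R = 3) {A B C : Set β}
    (hAB : Disjoint A B) (hAC : Disjoint A C) (hBC : Disjoint B C)
    (hABC : IsAcyclic ([A ∪ B, A ∪ C, B ∪ C].foldl Invert R)) :
    invNum (Dijoin L R) = 3 ∧ invNum L + invNum R = 4 := by
  obtain ⟨S, hS⟩ := exists_isAcyclic_invert_of_invNum_eq_one hL
  have hjoin : invNum (Dijoin L R) = invNum R :=
    invNum_dijoin_eq_invNum_right hS hABC hR.symm ⟨1, rfl⟩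
      (even_countP_mem_pairwise_union hAB hAC hBC)
  exact ⟨hjoin.trans hR, by rw [hL, hR]⟩

theorem invNum_dijoin_C3_blockTournament_three : invNum (Dijoin C3 (BlockTournament 3)) = 3 :=
  (dijoin_conjecture_counterexample_general invNum_C3 invNum_blockTournament_three
    (disjoint_blockEnds (by decide)) (disjoint_blockEnds (by decide))
    (disjoint_blockEnds (by decide)) isDecycling_blockTournament_three).1

/-- If `R` is a tournament with `inv(R) = 3` admitting pairwise disjoint sets
`A, B, C` such that `A∪B, A∪C, B∪C` is a decycling family, then
`inv(C⃗₃ → R) = 3 < inv(C⃗₃) + inv(R) = 4`; and such an `R` exists on 9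
vertices, disproving the dijoin conjecture. -/
theorem dijoin_conjecture_counterexample :
    (∀ (β : Type) [Fintype β] (R : β → β → Prop),
      IsTournament R → invNum R = 3 →
      ∀ A B C : Set β, Disjoint A B → Disjoint A C → Disjoint B C →
        IsAcyclic ([A ∪ B, A ∪ C, B ∪ C].foldl Invert R) →
        invNum (Dijoin C3 R) = 3 ∧ invNum C3 + invNum R = 4) ∧
    (∃ R : Fin 9 → Fin 9 → Prop, IsTournament R ∧ invNum R = 3 ∧
      invNum (Dijoin C3 R) = 3) :=
  ⟨fun _ _ _ _ hR _ _ _ => dijoin_conjecture_counterexample_general invNum_C3 hR,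
    BlockTournament 3, isTournament_blockTournament 3, invNum_blockTournament_three,
    invNum_dijoin_C3_blockTournament_three⟩
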